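/- arXiv:1212.5775 — 4 statements merged into one kernel-verified Lean document; each statement's English description precedes it below -/
import Mathlib

section
/- Let k be a field, H a k-bialgebra, and G ⊆ H a submonoid consisting of group-like elements that is almost central via a monoid homomorphism I : G → Aut(H) into the group of bialgebra automorphisms of H. Then the right ring of fractions L = H[G⁻¹] (the Ore localization of the algebra H at G) carries a comultiplication Δ_L : L → L ⊗ₖ L and a counit ε_L : L → k, determined by Δ_L(x/g) = Σ (x′/g) ⊗ (x″/g) and ε_L(x/g) = ε(x) (where Δ(x) = Σ x′ ⊗ x″ in Sweedler notation), which make L into a k-bialgebra, and the localization map φ : H → L, x ↦ x/1, is a homomorphism of bialgebras (a k-algebra homomorphism with (φ ⊗ φ) ∘ Δ = Δ_L ∘ φ and ε_L ∘ φ = ε). -/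
open scoped TensorProduct

theorem aux_lift {k H L A : Type*} [Field k] [Ring H] [Algebra k H] [Ring L] [Algebra k L]
    [Ring A] [Algebra k A] (G : Submonoid H)
    (hore : ∀ (g : H) (_ : g ∈ G) (x : H), ∃ y : H, x * g = g * y ∧ (x ∈ G → y ∈ G))
    (φ : H →ₐ[k] L)
    (hF1 : ∀ g ∈ G, IsUnit (φ g))
    (hF2 : ∀ a : L, ∃ x : H, ∃ g ∈ G, a = φ x * Ring.inverse (φ g))
    (hF3 : ∀ x : H, φ x = 0 ↔ ∃ g ∈ G, x * g = 0)
    (f : H →ₐ[k] A) (hf : ∀ g ∈ G, IsUnit (f g)) :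
    ∃ F : L →ₐ[k] A, ∀ x, F (φ x) = f x := by
  let R : L → A → Prop := fun a b => ∃ x : H, ∃ g ∈ G, a * φ g = φ x ∧ b * f g = f x
  have hφ : ∀ x, R (φ x) (f x) := fun x => ⟨x, 1, G.one_mem, by simp, by simp⟩
  have hadd : ∀ a b a' b', R a b → R a' b' → R (a + a') (b + b') := by
    rintro a b a' b' ⟨x, g, hg, h1, h2⟩ ⟨y, h, hh, h3, h4⟩
    obtain ⟨g', e, hg'⟩ := hore h hh g
    refine ⟨x * h + y * g', g * h, G.mul_mem hg hh, ?_, ?_⟩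
    · rw [add_mul, map_add, map_mul φ x, map_mul φ y, ← h1, ← h3, mul_assoc, mul_assoc,
        ← map_mul, ← map_mul, e]
    · rw [add_mul, map_add, map_mul f x, map_mul f y, ← h2, ← h4, mul_assoc, mul_assoc,
        ← map_mul, ← map_mul, e]
  have hmul : ∀ a b a' b', R a b → R a' b' → R (a * a') (b * b') := by
    rintro a b a' b' ⟨x, g, hg, h1, h2⟩ ⟨y, h, hh, h3, h4⟩
    obtain ⟨y', e, -⟩ := hore g hg y
    refine ⟨x * y', h * g, G.mul_mem hh hg, ?_, ?_⟩
    · rw [map_mul, map_mul, ← h1, mul_assoc, ← mul_assoc a', h3, ← map_mul, e, map_mul, mul_assoc]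
    · rw [map_mul, map_mul, ← h2, mul_assoc, ← mul_assoc b', h4, ← map_mul, e, map_mul, mul_assoc]
  have hzero : ∀ b, R 0 b → b = 0 := by
    rintro b ⟨x, g, hg, h1, h2⟩
    rw [zero_mul] at h1
    obtain ⟨u, hu, e⟩ := (hF3 x).1 h1.symm
    have hx : f x = 0 := by
      have : f x * f u = 0 := by rw [← map_mul, e, map_zero]
      exact (hf u hu).mul_left_eq_zero.1 this
    rw [hx] at h2
    exact (hf g hg).mul_left_eq_zero.1 h2
  have huniq : ∀ a b b', R a b → R a b' → b = b' := by
    intro a b b' h h'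
    have h1 := hmul _ _ _ _ (hφ (-1)) h'
    have h2 := hadd _ _ _ _ h h1
    simp only [map_neg, map_one, neg_mul, one_mul, add_neg_cancel] at h2
    exact add_neg_eq_zero.1 (hzero _ h2)
  have htot : ∀ a, ∃ b, R a b := by
    intro a
    obtain ⟨x, g, hg, rfl⟩ := hF2 a
    refine ⟨f x * Ring.inverse (f g), x, g, hg, ?_, ?_⟩
    · rw [mul_assoc, Ring.inverse_mul_cancel _ (hF1 g hg), mul_one]
    · rw [mul_assoc, Ring.inverse_mul_cancel _ (hf g hg), mul_one]
  choose F hF using htot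
  have hFφ : ∀ x, F (φ x) = f x := fun x => huniq _ _ _ (hF _) (hφ x)
  refine ⟨{ toFun := F, map_one' := ?_, map_mul' := ?_, map_zero' := ?_, map_add' := ?_, commutes' := ?_ }, hFφ⟩
  · simpa using hFφ 1
  · exact fun a b => huniq _ _ _ (hF _) (hmul _ _ _ _ (hF a) (hF b))
  · simpa using hFφ 0
  · exact fun a b => huniq _ _ _ (hF _) (hadd _ _ _ _ (hF a) (hF b))
  · intro r
    simpa using hFφ (algebraMap k H r)

theorem aux_ext {k H L A : Type*} [Field k] [Ring H] [Algebra k H] [Ring L] [Algebra k L]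
    [Ring A] [Algebra k A] (G : Submonoid H)
    (φ : H →ₐ[k] L)
    (hF1 : ∀ g ∈ G, IsUnit (φ g))
    (hF2 : ∀ a : L, ∃ x : H, ∃ g ∈ G, a = φ x * Ring.inverse (φ g))
    (F F' : L →ₐ[k] A) (h : ∀ x, F (φ x) = F' (φ x)) (a : L) : F a = F' a := by
  obtain ⟨x, g, hg, rfl⟩ := hF2 a
  have hu : IsUnit (F (φ g)) := (hF1 g hg).map F
  apply hu.mul_left_injective
  change F _ * F (φ g) = F' _ * F (φ g)
  rw [← map_mul, h g, ← map_mul, mul_assoc, Ring.inverse_mul_cancel _ (hF1 g hg), mul_one, h]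

/-- Let `k` be a field, `H` a `k`-bialgebra, and `G ⊆ H` a submonoid
consisting of group-like elements that is almost central via a monoid homomorphism
`I : G → Aut H` into the group of bialgebra automorphisms of `H` (formalized as algebra
automorphisms that commute with the comultiplication and the counit), i.e.
(C1) `g·x = I_g(x)·g` and (C2) each `I_g` maps `G` bijectively onto `G`.
Then the right ring of fractions `L = H[G⁻¹]` — formalized, following the paper's
Definition 2.4, as a `k`-algebra `L` with an algebra homomorphism `φ : H → L`
satisfying (F1), (F2), (F3) — carries a comultiplication `Δ_L : L → L ⊗ₖ L` and a counit
`ε_L : L → k`, determined by `Δ_L(x/g) = Σ (x′/g) ⊗ (x″/g)` and `ε_L(x/g) = ε(x)`,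
which make `L` into a `k`-bialgebra, and the localization map `φ` is a homomorphism of
bialgebras. -/
theorem stmt_4 {k H L : Type*} [Field k] [Ring H] [Bialgebra k H] [Ring L] [Algebra k L]
    (G : Submonoid H)
    (hGgl : ∀ g ∈ G, Coalgebra.comul (R := k) g = g ⊗ₜ[k] g ∧
      Coalgebra.counit (R := k) g = (1 : k))
    (I : G →* (H ≃ₐ[k] H))
    (hIco : ∀ (g : G) (x : H), Coalgebra.comul (R := k) (I g x) =
      TensorProduct.map (I g).toLinearMap (I g).toLinearMap (Coalgebra.comul (R := k) x))
    (hIcu : ∀ (g : G) (x : H),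
      Coalgebra.counit (R := k) (I g x) = Coalgebra.counit (R := k) x)
    (hC1 : ∀ (g : G) (x : H), (g : H) * x = I g x * (g : H))
    (hC2 : ∀ g : G, Set.BijOn (I g) (G : Set H) (G : Set H))
    (φ : H →ₐ[k] L)
    (hF1 : ∀ g ∈ G, IsUnit (φ g))
    (hF2 : ∀ a : L, ∃ x : H, ∃ g ∈ G, a = φ x * Ring.inverse (φ g))
    (hF3 : ∀ x : H, φ x = 0 ↔ ∃ g ∈ G, x * g = 0) :
    ∃ (Δ : L →ₗ[k] L ⊗[k] L) (ε : L →ₗ[k] k),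
      -- Δ_L and ε_L are determined on fractions:
      -- `Δ_L(x/g) = Σ (x′/g) ⊗ (x″/g) = ((φ ⊗ φ)(Δ x)) · (φ(g)⁻¹ ⊗ φ(g)⁻¹)`
      (∀ x : H, ∀ g ∈ G,
        Δ (φ x * Ring.inverse (φ g)) =
          TensorProduct.map φ.toLinearMap φ.toLinearMap (Coalgebra.comul (R := k) x) *
            (Ring.inverse (φ g) ⊗ₜ[k] Ring.inverse (φ g))) ∧
      -- `ε_L(x/g) = ε(x)`
      (∀ x : H, ∀ g ∈ G,
        ε (φ x * Ring.inverse (φ g)) = Coalgebra.counit (R := k) x) ∧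
      -- coassociativity:
      (∀ a : L, (TensorProduct.assoc k L L L)
          (TensorProduct.map Δ (LinearMap.id : L →ₗ[k] L) (Δ a)) =
        TensorProduct.map (LinearMap.id : L →ₗ[k] L) Δ (Δ a)) ∧
      -- counit axioms:
      (∀ a : L, (TensorProduct.lid k L)
        (TensorProduct.map ε (LinearMap.id : L →ₗ[k] L) (Δ a)) = a) ∧
      (∀ a : L, (TensorProduct.rid k L)
        (TensorProduct.map (LinearMap.id : L →ₗ[k] L) ε (Δ a)) = a) ∧
      -- Δ_L and ε_L are homomorphisms of unital algebras, so `L` is a `k`-bialgebra: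
      Δ 1 = 1 ∧ (∀ a b : L, Δ (a * b) = Δ a * Δ b) ∧
      ε 1 = 1 ∧ (∀ a b : L, ε (a * b) = ε a * ε b) ∧
      -- the localization map φ is a homomorphism of bialgebras:
      (∀ x : H, Δ (φ x) =
        TensorProduct.map φ.toLinearMap φ.toLinearMap (Coalgebra.comul (R := k) x)) ∧
      (∀ x : H, ε (φ x) = Coalgebra.counit (R := k) x) := by
  have hore : ∀ (g : H) (_ : g ∈ G) (x : H), ∃ y : H, x * g = g * y ∧ (x ∈ G → y ∈ G) := by
    intro g hg x
    refine ⟨(I ⟨g, hg⟩).symm x, ?_, ?_⟩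
    · have := hC1 ⟨g, hg⟩ ((I ⟨g, hg⟩).symm x)
      simpa using this.symm
    · intro hx
      obtain ⟨y, hy, e⟩ := (hC2 ⟨g, hg⟩).surjOn hx
      rw [← e]
      simpa using hy
  let f : H →ₐ[k] L ⊗[k] L := (Algebra.TensorProduct.map φ φ).comp (Bialgebra.comulAlgHom k H)
  have hfd : ∀ x, f x = TensorProduct.map φ.toLinearMap φ.toLinearMap
      (Coalgebra.comul (R := k) x) := fun x => rfl
  have hfg : ∀ g ∈ G, f g = φ g ⊗ₜ[k] φ g := by
    intro g hg
    rw [hfd, (hGgl g hg).1]; rfl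
  have hinv : ∀ g ∈ G, (φ g ⊗ₜ[k] φ g) * (Ring.inverse (φ g) ⊗ₜ[k] Ring.inverse (φ g)) = 1 := by
    intro g hg
    rw [Algebra.TensorProduct.tmul_mul_tmul, Ring.mul_inverse_cancel _ (hF1 g hg)]; rfl
  have hinv' : ∀ g ∈ G, (Ring.inverse (φ g) ⊗ₜ[k] Ring.inverse (φ g)) * (φ g ⊗ₜ[k] φ g) = 1 := by
    intro g hg
    rw [Algebra.TensorProduct.tmul_mul_tmul, Ring.inverse_mul_cancel _ (hF1 g hg)]; rfl
  have hfu : ∀ g ∈ G, IsUnit (f g) := by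
    intro g hg
    rw [hfg g hg]
    exact ⟨⟨_, _, hinv g hg, hinv' g hg⟩, rfl⟩
  obtain ⟨D, hD⟩ := aux_lift G hore φ hF1 hF2 hF3 f hfu
  obtain ⟨E, hE⟩ := aux_lift G hore φ hF1 hF2 hF3 (Bialgebra.counitAlgHom k H) (by
    intro g hg
    rw [Bialgebra.counitAlgHom_apply, (hGgl g hg).2]
    exact isUnit_one)
  have hE' : ∀ x, E (φ x) = Coalgebra.counit (R := k) x := hE
  refine ⟨D.toLinearMap, E.toLinearMap, ?_, ?_, ?_, ?_, ?_, map_one D, map_mul D, map_one E,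
    map_mul E, hD, hE⟩
  · intro x g hg
    change D _ = _
    rw [← hfd, map_mul, hD]
    congr 1
    have h1 : D (Ring.inverse (φ g)) * (φ g ⊗ₜ[k] φ g) = 1 := by
      rw [← hfg g hg, ← hD, ← map_mul, Ring.inverse_mul_cancel _ (hF1 g hg), map_one]
    exact left_inv_eq_right_inv h1 (hinv g hg)
  · intro x g hg
    change E _ = _
    have h1 : E (Ring.inverse (φ g)) * E (φ g) = 1 := by
      rw [← map_mul, Ring.inverse_mul_cancel _ (hF1 g hg), map_one]
    rw [hE', (hGgl g hg).2, mul_one] at h1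
    rw [map_mul, hE', h1, mul_one]
  · refine aux_ext G φ hF1 hF2
      ((Algebra.TensorProduct.assoc k k k L L L).toAlgHom.comp
        ((Algebra.TensorProduct.map D (AlgHom.id k L)).comp D))
      ((Algebra.TensorProduct.map (AlgHom.id k L) D).comp D) ?_
    intro x
    change (TensorProduct.assoc k L L L)
          (TensorProduct.map D.toLinearMap (LinearMap.id : L →ₗ[k] L) (D (φ x))) =
        TensorProduct.map (LinearMap.id : L →ₗ[k] L) D.toLinearMap (D (φ x))
    rw [hD, hfd]
    have key := congrArg (TensorProduct.map φ.toLinearMap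
      (TensorProduct.map φ.toLinearMap φ.toLinearMap)) (Coalgebra.coassoc_apply (R := k) x)
    have hDc : D.toLinearMap ∘ₗ φ.toLinearMap =
        TensorProduct.map φ.toLinearMap φ.toLinearMap ∘ₗ Coalgebra.comul (R := k) :=
      LinearMap.ext hD
    have e1 : ∀ t : (H ⊗[k] H) ⊗[k] H, TensorProduct.map φ.toLinearMap
        (TensorProduct.map φ.toLinearMap φ.toLinearMap) (TensorProduct.assoc k H H H t) =
        TensorProduct.assoc k L L L (TensorProduct.map
          (TensorProduct.map φ.toLinearMap φ.toLinearMap) φ.toLinearMap t) :=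
      fun t => LinearMap.congr_fun (TensorProduct.map_map_comp_assoc_eq _ _ _) t
    rw [e1] at key
    rw [← LinearMap.comp_apply (TensorProduct.map D.toLinearMap _),
      ← LinearMap.comp_apply (TensorProduct.map _ D.toLinearMap),
      ← TensorProduct.map_comp, ← TensorProduct.map_comp, hDc]
    rw [LinearMap.rTensor, LinearMap.lTensor,
      ← LinearMap.comp_apply (TensorProduct.map (TensorProduct.map _ _) _),
      ← LinearMap.comp_apply (TensorProduct.map _ (TensorProduct.map _ _)),
      ← TensorProduct.map_comp, ← TensorProduct.map_comp] at key
    exact key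
  · refine aux_ext G φ hF1 hF2
      ((Algebra.TensorProduct.lid k L).toAlgHom.comp
        ((Algebra.TensorProduct.map E (AlgHom.id k L)).comp D)) (AlgHom.id k L) ?_
    intro x
    change (TensorProduct.lid k L)
        (TensorProduct.map E.toLinearMap (LinearMap.id : L →ₗ[k] L) (D (φ x))) = φ x
    rw [hD, hfd]
    have key := Coalgebra.rTensor_counit_comul (R := k) x
    have gen : ∀ t : H ⊗[k] H, (TensorProduct.lid k L)
        (TensorProduct.map E.toLinearMap (LinearMap.id : L →ₗ[k] L)
          (TensorProduct.map φ.toLinearMap φ.toLinearMap t)) =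
        φ (TensorProduct.lid k H (Coalgebra.counit.rTensor H t)) := by
      intro t
      induction t with
      | zero => simp
      | tmul a b => simp [hE']
      | add a b ha hb => simp only [map_add, ha, hb]
    rw [gen, key]
    simp
  · refine aux_ext G φ hF1 hF2
      ((Algebra.TensorProduct.rid k k L).toAlgHom.comp
        ((Algebra.TensorProduct.map (AlgHom.id k L) E).comp D)) (AlgHom.id k L) ?_
    intro x
    change (TensorProduct.rid k L)
        (TensorProduct.map (LinearMap.id : L →ₗ[k] L) E.toLinearMap (D (φ x))) = φ x
    rw [hD, hfd]
    have key := Coalgebra.lTensor_counit_comul (R := k) x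
    have gen : ∀ t : H ⊗[k] H, (TensorProduct.rid k L)
        (TensorProduct.map (LinearMap.id : L →ₗ[k] L) E.toLinearMap
          (TensorProduct.map φ.toLinearMap φ.toLinearMap t)) =
        φ (TensorProduct.rid k H (Coalgebra.counit.lTensor H t)) := by
      intro t
      induction t with
      | zero => simp
      | tmul a b => simp [hE']
      | add a b ha hb => simp only [map_add, ha, hb]
    rw [gen, key]
    simp
end

section
/- Let k be a field, H a k-bialgebra, and G ⊆ H a submonoid of group-like elements that is almost central via bialgebra automorphisms I : G → Aut(H), and write L = H[G⁻¹] with localization map φ : H → L. Then the k-algebra homomorphism (φ ⊗ φ) ∘ Δ : H → L ⊗ₖ L sends every g ∈ G to the invertible element φ(g) ⊗ φ(g) (whose inverse is φ(g)⁻¹ ⊗ φ(g)⁻¹), and hence there exists a unique k-algebra homomorphism Δ̄ : L → L ⊗ₖ L with Δ̄ ∘ φ = (φ ⊗ φ) ∘ Δ; it satisfies Δ̄(x/g) = Σ (x′/g) ⊗ (x″/g) for all x ∈ H and g ∈ G, where Δ(x) = Σ x′ ⊗ x″ in Sweedler notation. -/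
open scoped TensorProduct

/-- Universal property of the right ring of fractions, in the form needed below. -/
theorem ore_lift {k H L A : Type*} [Field k] [Ring H] [Algebra k H] [Ring L] [Algebra k L]
    [Ring A] [Algebra k A] (G : Submonoid H)
    (hO : ∀ g ∈ G, ∀ x : H, ∃ x' : H, g * x' = x * g)
    (φ : H →ₐ[k] L)
    (hF2 : ∀ a : L, ∃ x : H, ∃ g ∈ G, a * φ g = φ x)
    (hF3 : ∀ x : H, φ x = 0 → ∃ g ∈ G, x * g = 0)
    (f : H →ₐ[k] A) (hf : ∀ g ∈ G, IsUnit (f g)) :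
    ∃ F : L →ₐ[k] A, F.comp φ = f := by
  have hker : ∀ x y : H, φ x = φ y → f x = f y := by
    intro x y h
    obtain ⟨t, ht, h0⟩ := hF3 (x - y) (by rw [map_sub, h, sub_self])
    have h1 : f (x - y) * f t = 0 := by rw [← map_mul, h0, map_zero]
    have h2 := (hf t ht).mul_left_eq_zero.mp h1
    rwa [map_sub, sub_eq_zero] at h2
  let P : L → A → Prop := fun a b => ∃ x : H, ∃ g ∈ G, a * φ g = φ x ∧ b * f g = f x
  have hex : ∀ a, ∃ b, P a b := by
    intro a
    obtain ⟨x, g, hg, h⟩ := hF2 a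
    refine ⟨f x * Ring.inverse (f g), x, g, hg, h, ?_⟩
    rw [mul_assoc, Ring.inverse_mul_cancel _ (hf g hg), mul_one]
  have huniq : ∀ a b b', P a b → P a b' → b = b' := by
    rintro a b b' ⟨x, g, hg, h1, h2⟩ ⟨y, h, hh, h3, h4⟩
    obtain ⟨h', e⟩ := hO g hg h
    have h5 : φ (x * h') = φ (y * g) := by
      rw [map_mul, map_mul, ← h1, ← h3, mul_assoc, mul_assoc, ← map_mul, ← map_mul, e]
    have h6 := hker _ _ h5
    apply (hf _ (G.mul_mem hh hg)).mul_right_cancel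
    have h7 : b * f (h * g) = f (x * h') := by
      rw [← e, map_mul, map_mul, ← mul_assoc, h2]
    rw [h7, h6, map_mul, map_mul, ← mul_assoc, h4]
  have hadd : ∀ a b c d, P a b → P c d → P (a + c) (b + d) := by
    rintro a b c d ⟨x, g, hg, h1, h2⟩ ⟨y, h, hh, h3, h4⟩
    obtain ⟨h', e⟩ := hO g hg h
    refine ⟨x * h' + y * g, h * g, G.mul_mem hh hg, ?_, ?_⟩
    · rw [add_mul, map_add]
      congr 1
      · rw [← e, map_mul, map_mul, ← mul_assoc, h1]
      · rw [map_mul, map_mul, ← mul_assoc, h3]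
    · rw [add_mul, map_add]
      congr 1
      · rw [← e, map_mul, map_mul, ← mul_assoc, h2]
      · rw [map_mul, map_mul, ← mul_assoc, h4]
  have hmul : ∀ a b c d, P a b → P c d → P (a * c) (b * d) := by
    rintro a b c d ⟨x, g, hg, h1, h2⟩ ⟨y, h, hh, h3, h4⟩
    obtain ⟨y', e⟩ := hO g hg y
    refine ⟨x * y', h * g, G.mul_mem hh hg, ?_, ?_⟩
    · rw [map_mul, mul_assoc, ← mul_assoc c, h3, ← map_mul, ← e, map_mul, ← mul_assoc, h1,
        ← map_mul]
    · rw [map_mul, mul_assoc, ← mul_assoc d, h4, ← map_mul, ← e, map_mul, ← mul_assoc, h2,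
        ← map_mul]
  have hφ : ∀ x, P (φ x) (f x) := fun x => ⟨x, 1, G.one_mem, by simp, by simp⟩
  choose F hF using hex
  have hFφ : ∀ x, F (φ x) = f x := fun x => huniq _ _ _ (hF _) (hφ x)
  refine ⟨{ toFun := F, map_one' := ?_, map_mul' := ?_, map_zero' := ?_, map_add' := ?_,
            commutes' := ?_ }, ?_⟩
  · have := hFφ 1
    rwa [map_one, map_one] at this
  · exact fun a c => huniq _ _ _ (hF _) (hmul _ _ _ _ (hF a) (hF c))
  · have := hFφ 0
    rwa [map_zero, map_zero] at this
  · exact fun a c => huniq _ _ _ (hF _) (hadd _ _ _ _ (hF a) (hF c))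
  · intro r
    have := hFφ (algebraMap k H r)
    rwa [AlgHom.commutes, AlgHom.commutes] at this
  · ext x
    exact hFφ x

/-- Let `k` be a field, `H` a `k`-bialgebra, and `G ⊆ H` a submonoid of
group-like elements that is almost central via bialgebra automorphisms `I : G → Aut H`,
and write `L = H[G⁻¹]` with localization map `φ : H → L` (formalized, following the paper's
Definition 2.4, by the conditions (F1), (F2), (F3)).  Then the `k`-algebra homomorphism
`ψ = (φ ⊗ φ) ∘ Δ : H → L ⊗ₖ L` sends every `g ∈ G` to the invertible element `φ(g) ⊗ φ(g)`
(whose inverse is `φ(g)⁻¹ ⊗ φ(g)⁻¹`), and hence there exists a unique `k`-algebra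
homomorphism `Δ̄ : L → L ⊗ₖ L` with `Δ̄ ∘ φ = (φ ⊗ φ) ∘ Δ`; it satisfies
`Δ̄(x/g) = Σ (x′/g) ⊗ (x″/g)  ( = ((φ ⊗ φ)(Δ x)) · (φ(g)⁻¹ ⊗ φ(g)⁻¹) )`. -/
theorem stmt_6 {k H L : Type*} [Field k] [Ring H] [Bialgebra k H] [Ring L] [Algebra k L]
    (G : Submonoid H)
    (hGgl : ∀ g ∈ G, Coalgebra.comul (R := k) g = g ⊗ₜ[k] g ∧
      Coalgebra.counit (R := k) g = (1 : k))
    (I : G →* (H ≃ₐ[k] H))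
    (hIco : ∀ (g : G) (x : H), Coalgebra.comul (R := k) (I g x) =
      TensorProduct.map (I g).toLinearMap (I g).toLinearMap (Coalgebra.comul (R := k) x))
    (hIcu : ∀ (g : G) (x : H),
      Coalgebra.counit (R := k) (I g x) = Coalgebra.counit (R := k) x)
    (hC1 : ∀ (g : G) (x : H), (g : H) * x = I g x * (g : H))
    (hC2 : ∀ g : G, Set.BijOn (I g) (G : Set H) (G : Set H))
    (φ : H →ₐ[k] L)
    (hF1 : ∀ g ∈ G, IsUnit (φ g))
    (hF2 : ∀ a : L, ∃ x : H, ∃ g ∈ G, a = φ x * Ring.inverse (φ g))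
    (hF3 : ∀ x : H, φ x = 0 ↔ ∃ g ∈ G, x * g = 0)
    -- `ψ = (φ ⊗ φ) ∘ Δ : H → L ⊗ₖ L` as a `k`-algebra homomorphism:
    (ψ : H →ₐ[k] L ⊗[k] L)
    (hψ : ψ = (Algebra.TensorProduct.map φ φ).comp (Bialgebra.comulAlgHom k H)) :
    -- `ψ` sends every `g ∈ G` to `φ(g) ⊗ φ(g)`, invertible with inverse `φ(g)⁻¹ ⊗ φ(g)⁻¹`:
    (∀ g ∈ G, ψ g = φ g ⊗ₜ[k] φ g ∧
      ψ g * (Ring.inverse (φ g) ⊗ₜ[k] Ring.inverse (φ g)) = 1 ∧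
      (Ring.inverse (φ g) ⊗ₜ[k] Ring.inverse (φ g)) * ψ g = 1) ∧
    -- hence there is a unique `k`-algebra homomorphism `Δ̄ : L → L ⊗ₖ L` with
    -- `Δ̄ ∘ φ = (φ ⊗ φ) ∘ Δ`, and it satisfies the stated formula on fractions:
    ∃ Δbar : L →ₐ[k] L ⊗[k] L,
      Δbar.comp φ = ψ ∧
      (∀ D : L →ₐ[k] L ⊗[k] L, D.comp φ = ψ → D = Δbar) ∧
      (∀ x : H, ∀ g ∈ G,
        Δbar (φ x * Ring.inverse (φ g)) =
          ψ x * (Ring.inverse (φ g) ⊗ₜ[k] Ring.inverse (φ g))) := by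
  have h1 : ∀ g ∈ G, ψ g = φ g ⊗ₜ[k] φ g ∧
      ψ g * (Ring.inverse (φ g) ⊗ₜ[k] Ring.inverse (φ g)) = 1 ∧
      (Ring.inverse (φ g) ⊗ₜ[k] Ring.inverse (φ g)) * ψ g = 1 := by
    intro g hg
    have e : ψ g = φ g ⊗ₜ[k] φ g := by
      rw [hψ, AlgHom.comp_apply, Bialgebra.comulAlgHom_apply, (hGgl g hg).1,
        Algebra.TensorProduct.map_tmul]
    refine ⟨e, ?_, ?_⟩
    · rw [e, Algebra.TensorProduct.tmul_mul_tmul, Ring.mul_inverse_cancel _ (hF1 g hg),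
        Algebra.TensorProduct.one_def]
    · rw [e, Algebra.TensorProduct.tmul_mul_tmul, Ring.inverse_mul_cancel _ (hF1 g hg),
        Algebra.TensorProduct.one_def]
  have hunit : ∀ g ∈ G, IsUnit (ψ g) := fun g hg =>
    ⟨⟨ψ g, _, (h1 g hg).2.1, (h1 g hg).2.2⟩, rfl⟩
  have key : ∀ D : L →ₐ[k] L ⊗[k] L, D.comp φ = ψ → ∀ x : H, ∀ g ∈ G,
      D (φ x * Ring.inverse (φ g)) =
        ψ x * (Ring.inverse (φ g) ⊗ₜ[k] Ring.inverse (φ g)) := by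
    intro D hD x g hg
    have hDφ : ∀ y, D (φ y) = ψ y := fun y => by rw [← hD]; rfl
    apply (hunit g hg).mul_right_cancel
    rw [mul_assoc (ψ x), (h1 g hg).2.2, mul_one, ← hDφ g, ← map_mul, mul_assoc,
      Ring.inverse_mul_cancel _ (hF1 g hg), mul_one, hDφ]
  refine ⟨h1, ?_⟩
  obtain ⟨F, hF⟩ := ore_lift G
    (fun g hg x => ⟨(I ⟨g, hg⟩).symm x, by
      have := hC1 ⟨g, hg⟩ ((I ⟨g, hg⟩).symm x)
      rwa [AlgEquiv.apply_symm_apply] at this⟩) φ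
    (fun a => by
      obtain ⟨x, g, hg, rfl⟩ := hF2 a
      exact ⟨x, g, hg, by
        rw [mul_assoc, Ring.inverse_mul_cancel _ (hF1 g hg), mul_one]⟩)
    (fun x => (hF3 x).mp) ψ hunit
  refine ⟨F, hF, ?_, key F hF⟩
  intro D hD
  ext a
  obtain ⟨x, g, hg, rfl⟩ := hF2 a
  rw [key D hD x g hg, key F hF x g hg]
end

section
/- Let k be a field, let H, L and T be k-bialgebras, and let G ⊆ H be a submonoid consisting of group-like elements. Suppose φ : H → L is a bialgebra homomorphism such that φ(g) is invertible in L for every g ∈ G and such that every element of L is of the form φ(x)·φ(g)⁻¹ for some x ∈ H and g ∈ G. Let ψ : H → T be a bialgebra homomorphism such that ψ(g) is invertible in T for every g ∈ G, and let σ : L → T be a k-algebra homomorphism with σ ∘ φ = ψ. Then σ is also a homomorphism of coalgebras, i.e. (σ ⊗ σ) ∘ Δ_L = Δ_T ∘ σ and ε_T ∘ σ = ε_L, so σ is a bialgebra homomorphism. -/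
open scoped TensorProduct

/-- Let `k` be a field, let `H`, `L` and `T` be `k`-bialgebras, and let
`G ⊆ H` be a submonoid consisting of group-like elements.  Suppose `φ : H → L` is a
bialgebra homomorphism such that `φ(g)` is invertible in `L` for every `g ∈ G` and such
that every element of `L` is of the form `φ(x)·φ(g)⁻¹` for some `x ∈ H` and `g ∈ G`.
Let `ψ : H → T` be a bialgebra homomorphism such that `ψ(g)` is invertible in `T` for
every `g ∈ G`, and let `σ : L → T` be a `k`-algebra homomorphism with `σ ∘ φ = ψ`.
Then `σ` is also a homomorphism of coalgebras, i.e. `(σ ⊗ σ) ∘ Δ_L = Δ_T ∘ σ` and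
`ε_T ∘ σ = ε_L`, so `σ` is a bialgebra homomorphism. -/
theorem stmt_7 {k H L T : Type*} [Field k] [Ring H] [Ring L] [Ring T]
    [Bialgebra k H] [Bialgebra k L] [Bialgebra k T]
    (G : Submonoid H)
    (hGgl : ∀ g ∈ G, Coalgebra.comul (R := k) g = g ⊗ₜ[k] g ∧
      Coalgebra.counit (R := k) g = (1 : k))
    (φ : H →ₐc[k] L)
    (hF1 : ∀ g ∈ G, IsUnit (φ g))
    (hF2 : ∀ a : L, ∃ x : H, ∃ g ∈ G, a = φ x * Ring.inverse (φ g))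
    (ψ : H →ₐc[k] T)
    (hψ : ∀ g ∈ G, IsUnit (ψ g))
    (σ : L →ₐ[k] T)
    (hσ : ∀ x : H, σ (φ x) = ψ x) :
    (∀ a : L, Coalgebra.comul (R := k) (σ a) =
      TensorProduct.map σ.toLinearMap σ.toLinearMap (Coalgebra.comul (R := k) a)) ∧
    (∀ a : L, Coalgebra.counit (R := k) (σ a) = Coalgebra.counit (R := k) a) := by
  have key : ∀ {A : Type _} [Ring A] [Algebra k A] (f₁ f₂ : L →ₐ[k] A),
      (∀ x, f₁ (φ x) = f₂ (φ x)) → ∀ a, f₁ a = f₂ a := by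
    intro A _ _ f₁ f₂ h a
    obtain ⟨x, g, hg, rfl⟩ := hF2 a
    have hu : IsUnit (f₁ (φ g)) := (hF1 g hg).map f₁
    apply hu.mul_right_cancel
    conv_rhs => rw [h g]
    rw [← map_mul, ← map_mul, mul_assoc, Ring.inverse_mul_cancel _ (hF1 g hg), mul_one, h]
  have key' : ∀ (f₁ f₂ : L →ₐ[k] k),
      (∀ x, f₁ (φ x) = f₂ (φ x)) → ∀ a, f₁ a = f₂ a := by
    intro f₁ f₂ h a
    obtain ⟨x, g, hg, rfl⟩ := hF2 a
    have hu : IsUnit (f₁ (φ g)) := (hF1 g hg).map f₁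
    apply hu.mul_right_cancel
    conv_rhs => rw [h g]
    rw [← map_mul, ← map_mul, mul_assoc, Ring.inverse_mul_cancel _ (hF1 g hg), mul_one, h]
  constructor
  · refine key ((Bialgebra.comulAlgHom k T).comp σ)
      ((Algebra.TensorProduct.map σ σ).comp (Bialgebra.comulAlgHom k L)) ?_
    intro x
    have h1 : Coalgebra.comul (R := k) (ψ x) = TensorProduct.map (ψ : H →ₗ[k] T)
      (ψ : H →ₗ[k] T) (Coalgebra.comul (R := k) x) :=
      (CoalgHomClass.map_comp_comul_apply ψ x).symm
    have h2 : Coalgebra.comul (R := k) (φ x) = TensorProduct.map (φ : H →ₗ[k] L)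
      (φ : H →ₗ[k] L) (Coalgebra.comul (R := k) x) :=
      (CoalgHomClass.map_comp_comul_apply φ x).symm
    have h3 : (ψ : H →ₗ[k] T) = σ.toLinearMap ∘ₗ (φ : H →ₗ[k] L) := by
      ext y
      exact (hσ y).symm
    change Coalgebra.comul (R := k) (σ (φ x)) =
      TensorProduct.map σ.toLinearMap σ.toLinearMap (Coalgebra.comul (R := k) (φ x))
    rw [hσ, h1, h2, h3, TensorProduct.map_comp, LinearMap.comp_apply]
  · refine key' ((Bialgebra.counitAlgHom k T).comp σ) (Bialgebra.counitAlgHom k L) ?_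
    intro x
    change Coalgebra.counit (R := k) (σ (φ x)) = Coalgebra.counit (R := k) (φ x)
    rw [hσ]
    exact (CoalgHomClass.counit_comp_apply ψ x).trans
      (CoalgHomClass.counit_comp_apply φ x).symm
end

section
/- Let k be a field, H and L k-bialgebras, and G ⊆ H a submonoid consisting of group-like elements. Suppose φ : H → L is a bialgebra homomorphism such that (F1) φ(g) is invertible in L for every g ∈ G, (F2) every element of L is of the form φ(x)·φ(g)⁻¹ with x ∈ H and g ∈ G, and (F3) for x ∈ H one has φ(x) = 0 if and only if x·g = 0 for some g ∈ G. Then for every k-bialgebra T and every bialgebra homomorphism ψ : H → T such that ψ(g) is invertible in T for all g ∈ G, there exists a unique bialgebra homomorphism σ : L → T with σ ∘ φ = ψ. -/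
open scoped TensorProduct

theorem aux_hom_ext {k H L A : Type*} [Field k] [Ring H] [Ring L] [Ring A]
    [Algebra k H] [Algebra k L] [Algebra k A] (G : Submonoid H) (φ : H →ₐ[k] L)
    (hF1 : ∀ g ∈ G, IsUnit (φ g))
    (hF2 : ∀ a : L, ∃ x : H, ∃ g ∈ G, a * φ g = φ x)
    (f₁ f₂ : L →ₐ[k] A) (h : ∀ x, f₁ (φ x) = f₂ (φ x)) : f₁ = f₂ := by
  ext a
  obtain ⟨x, g, hg, e⟩ := hF2 a
  have hu : IsUnit (f₁ (φ g)) := (hF1 g hg).map f₁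
  apply hu.mul_right_cancel
  rw [← map_mul, e, h, h, ← e, map_mul]

theorem aux_exists {k H L T : Type*} [Field k] [Ring H] [Ring L] [Ring T]
    [Algebra k H] [Algebra k L] [Algebra k T] (G : Submonoid H) (φ : H →ₐ[k] L)
    (hF1 : ∀ g ∈ G, IsUnit (φ g))
    (hF2 : ∀ a : L, ∃ x : H, ∃ g ∈ G, a * φ g = φ x)
    (hF3 : ∀ x : H, φ x = 0 → ∃ g ∈ G, x * g = 0)
    (ψ : H →ₐ[k] T) (hψ : ∀ g ∈ G, IsUnit (ψ g)) :
    ∃ σ : L →ₐ[k] T, ∀ x : H, σ (φ x) = ψ x := by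
  have eqz : ∀ x y : H, φ x = φ y → ∃ g ∈ G, x * g = y * g := by
    intro x y h
    obtain ⟨g, hg, e⟩ := hF3 (x - y) (by rw [map_sub, h, sub_self])
    exact ⟨g, hg, by rwa [sub_mul, sub_eq_zero] at e⟩
  have ore : ∀ x : H, ∀ g ∈ G, ∃ y : H, ∃ h ∈ G, x * h = g * y := by
    intro x g hg
    obtain ⟨u, hu⟩ := hF1 g hg
    obtain ⟨y, h, hh, e⟩ := hF2 (↑u⁻¹ * φ x)
    have : φ (x * h) = φ (g * y) := by
      rw [map_mul, map_mul, ← e, ← hu]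
      simp [mul_assoc]
    obtain ⟨t, ht, e'⟩ := eqz _ _ this
    exact ⟨y * t, h * t, G.mul_mem hh ht, by rw [← mul_assoc, e', mul_assoc]⟩
  let R : L → T → Prop := fun a b => ∃ x : H, ∃ g ∈ G, a * φ g = φ x ∧ b * ψ g = ψ x
  have tot : ∀ a, ∃ b, R a b := by
    intro a
    obtain ⟨x, g, hg, e⟩ := hF2 a
    obtain ⟨u, hu⟩ := hψ g hg
    exact ⟨ψ x * ↑u⁻¹, x, g, hg, e, by rw [← hu]; simp⟩
  have uniq : ∀ a b b', R a b → R a b' → b = b' := by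
    rintro a b b' ⟨x, g, hg, e1, e2⟩ ⟨x', g', hg', e1', e2'⟩
    obtain ⟨y, h, hh, e⟩ := ore g g' hg'
    have : φ (x * h) = φ (x' * y) := by
      rw [map_mul, map_mul, ← e1, ← e1', mul_assoc, mul_assoc, ← map_mul, ← map_mul, e]
    obtain ⟨t, ht, e'⟩ := eqz _ _ this
    apply (hψ _ (G.mul_mem (G.mul_mem hg hh) ht)).mul_right_cancel
    calc b * ψ (g * h * t) = ψ (x * h * t) := by simp only [map_mul, ← e2, mul_assoc]
      _ = ψ (x' * y * t) := by rw [e']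
      _ = b' * ψ (g' * y * t) := by simp only [map_mul, ← e2', mul_assoc]
      _ = b' * ψ (g * h * t) := by rw [e]
  have hadd : ∀ a b a' b', R a b → R a' b' → R (a + a') (b + b') := by
    rintro a b a' b' ⟨x, g, hg, e1, e2⟩ ⟨x', g', hg', e1', e2'⟩
    obtain ⟨y, h, hh, e⟩ := ore g g' hg'
    refine ⟨x * h + x' * y, g * h, G.mul_mem hg hh, ?_, ?_⟩
    · rw [add_mul, map_add]
      congr 1
      · rw [map_mul, map_mul, ← e1, mul_assoc]
      · rw [e, map_mul, map_mul, ← e1', mul_assoc]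
    · rw [add_mul, map_add]
      congr 1
      · rw [map_mul, map_mul, ← e2, mul_assoc]
      · rw [e, map_mul, map_mul, ← e2', mul_assoc]
  have hmul : ∀ a b a' b', R a b → R a' b' → R (a * a') (b * b') := by
    rintro a b a' b' ⟨x, g, hg, e1, e2⟩ ⟨x', g', hg', e1', e2'⟩
    obtain ⟨y, h, hh, e⟩ := ore x' g hg
    refine ⟨x * y, g' * h, G.mul_mem hg' hh, ?_, ?_⟩
    · calc a * a' * φ (g' * h) = a * ((a' * φ g') * φ h) := by simp only [map_mul, mul_assoc]
        _ = a * φ (g * y) := by rw [e1', ← map_mul, e]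
        _ = φ (x * y) := by rw [map_mul, map_mul, ← e1, mul_assoc]
    · calc b * b' * ψ (g' * h) = b * ((b' * ψ g') * ψ h) := by simp only [map_mul, mul_assoc]
        _ = b * ψ (g * y) := by rw [e2', ← map_mul, e]
        _ = ψ (x * y) := by rw [map_mul, map_mul, ← e2, mul_assoc]
  have hH : ∀ x, R (φ x) (ψ x) := fun x => ⟨x, 1, G.one_mem, by simp, by simp⟩
  have halg : ∀ r : k, R (algebraMap k L r) (algebraMap k T r) := fun r => by
    simpa using hH (algebraMap k H r)
  choose s hs using tot
  refine ⟨{ toFun := s, map_one' := ?_, map_mul' := ?_, map_zero' := ?_, map_add' := ?_,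
            commutes' := ?_ }, fun x => uniq _ _ _ (hs _) (hH x)⟩
  · exact uniq _ _ _ (hs _) (by simpa using halg 1)
  · exact fun a b => uniq _ _ _ (hs _) (hmul _ _ _ _ (hs _) (hs _))
  · exact uniq _ _ _ (hs _) (by simpa using halg 0)
  · exact fun a b => uniq _ _ _ (hs _) (hadd _ _ _ _ (hs _) (hs _))
  · exact fun r => uniq _ _ _ (hs _) (halg r)

/-- Let `k` be a field, `H` and `L` `k`-bialgebras, and `G ⊆ H` a
submonoid consisting of group-like elements.  Suppose `φ : H → L` is a bialgebra
homomorphism such that (F1) `φ(g)` is invertible in `L` for every `g ∈ G`, (F2) every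
element of `L` is of the form `φ(x)·φ(g)⁻¹` with `x ∈ H` and `g ∈ G`, and (F3) for
`x ∈ H` one has `φ(x) = 0` if and only if `x·g = 0` for some `g ∈ G`.  Then for every
`k`-bialgebra `T` and every bialgebra homomorphism `ψ : H → T` such that `ψ(g)` is
invertible in `T` for all `g ∈ G`, there exists a unique bialgebra homomorphism
`σ : L → T` with `σ ∘ φ = ψ`. -/
theorem stmt_14 {k H L T : Type*} [Field k] [Ring H] [Ring L] [Ring T]
    [Bialgebra k H] [Bialgebra k L] [Bialgebra k T]
    (G : Submonoid H)
    (hGgl : ∀ g ∈ G, Coalgebra.comul (R := k) g = g ⊗ₜ[k] g ∧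
      Coalgebra.counit (R := k) g = (1 : k))
    (φ : H →ₐc[k] L)
    (hF1 : ∀ g ∈ G, IsUnit (φ g))
    (hF2 : ∀ a : L, ∃ x : H, ∃ g ∈ G, a = φ x * Ring.inverse (φ g))
    (hF3 : ∀ x : H, φ x = 0 ↔ ∃ g ∈ G, x * g = 0)
    (ψ : H →ₐc[k] T)
    (hψ : ∀ g ∈ G, IsUnit (ψ g)) :
    ∃! σ : L →ₐc[k] T, ∀ x : H, σ (φ x) = ψ x := by
  have hF2' : ∀ a : L, ∃ x : H, ∃ g ∈ G, a * (φ : H →ₐ[k] L) g = (φ : H →ₐ[k] L) x := by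
    intro a
    obtain ⟨x, g, hg, e⟩ := hF2 a
    refine ⟨x, g, hg, ?_⟩
    change a * φ g = φ x
    rw [e, mul_assoc, Ring.inverse_mul_cancel _ (hF1 g hg), mul_one]
  obtain ⟨σ, hσ⟩ := aux_exists G (φ : H →ₐ[k] L) hF1 hF2' (fun x => (hF3 x).1)
    (ψ : H →ₐ[k] T) hψ
  have hcomp : σ.comp (φ : H →ₐ[k] L) = (ψ : H →ₐ[k] T) := AlgHom.ext hσ
  have h1 : (Bialgebra.counitAlgHom k T).comp σ = Bialgebra.counitAlgHom k L := by
    apply aux_hom_ext G (φ : H →ₐ[k] L) hF1 hF2'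
    intro x
    rw [AlgHom.comp_apply, hσ]
    have a1 := DFunLike.congr_fun (BialgHom.counitAlgHom_comp φ) x
    have a2 := DFunLike.congr_fun (BialgHom.counitAlgHom_comp ψ) x
    exact a2.trans a1.symm
  have h2 : (Algebra.TensorProduct.map σ σ).comp (Bialgebra.comulAlgHom k L) =
      (Bialgebra.comulAlgHom k T).comp σ := by
    apply aux_hom_ext G (φ : H →ₐ[k] L) hF1 hF2'
    intro x
    have a1 := DFunLike.congr_fun (BialgHom.map_comp_comulAlgHom φ) x
    have a2 := DFunLike.congr_fun (BialgHom.map_comp_comulAlgHom ψ) x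
    simp only [AlgHom.comp_apply] at a1 a2 ⊢
    rw [hσ, ← a1, ← a2, ← AlgHom.comp_apply, ← Algebra.TensorProduct.map_comp, hcomp]
  refine ⟨BialgHom.ofAlgHom σ h1 h2, hσ, ?_⟩
  intro τ hτ
  apply BialgHom.coe_toAlgHom_injective
  apply aux_hom_ext G (φ : H →ₐ[k] L) hF1 hF2'
  intro x
  exact (hτ x).trans (hσ x).symm
end
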